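/- arXiv:0812.0335 — 4 statements merged into one kernel-verified Lean document; each statement's English description precedes it below -/
import Mathlib

section
/- Let V be a real inner product space of dimension 2m ≥ 4, let J be an orthogonal complex structure on V, and let R be a J-invariant (Kähler) algebraic curvature tensor on V. Suppose that R(Z,JZ,W,JW) = 0 for all unit vectors Z, W ∈ V with ⟨Z,W⟩ = ⟨JZ,W⟩ = 0. Then R(Z,JZ,Z,JZ) + R(W,JW,W,JW) = 0 for all such pairs Z, W, and the scalar curvature of R is equal to zero. -/
/-!
Write `H X = R(X, JX, X, JX)` and `B(X, Y) = R(X, JX, Y, JY)`. For a Kähler tensor the bilinear map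
`(X, Y) ↦ R(X, JY, ·, ·)` is symmetric, and the first Bianchi identity becomes
`B(X, Y) = R(X, Y, X, Y) + R(X, JY, X, JY)` (`bisec_eq`).

By homogeneity the hypothesis says `B(Z, W) = 0` whenever `W ⟂ Z, JZ`. If moreover `‖Z‖ = ‖W‖`, then
`Z + W` and `Z - W` again satisfy this condition, so expanding `B(Z + W, Z - W) = 0` gives
`H Z + H W + 2 B(Z, W) = 4 R(Z, JW, Z, JW)`. Adding the same identity for `JW` in place of `W`, the
right-hand sides sum to `4 B(Z, W) = 0`, whence `H Z + H W = 0` (`holSec_add`).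

For the scalar curvature there are two cases.
* If `dim V = 4`, an orthonormal basis `X, JX, Y, JY` exists, and the scalar curvature computed in
  it is `2 H X + 2 H Y` plus multiples of `B(X, Y) = 0`, hence zero.
* If `dim V ≥ 6`, each unit vector belongs to a triple of pairwise complex-orthogonal unit vectors,
  and the three vanishing pairwise sums force `H = 0`. Polarizing `H` shows that all sectional
  curvatures vanish.
-/

open scoped RealInnerProductSpace
open Finset

variable {V : Type*} [NormedAddCommGroup V] [InnerProductSpace ℝ V]

/-- An algebraic curvature tensor on a real inner product space: a multilinear map
(linearity in the first slot, together with the symmetries, gives full multilinearity)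
satisfying the standard symmetries and the first Bianchi identity. -/
structure IsAlgCurvTensor (R : V → V → V → V → ℝ) : Prop where
  addLeft : ∀ X X' Y Z W, R (X + X') Y Z W = R X Y Z W + R X' Y Z W
  smulLeft : ∀ (c : ℝ) (X Y Z W : V), R (c • X) Y Z W = c * R X Y Z W
  antisymm : ∀ X Y Z W, R X Y Z W = - R Y X Z W
  pairSymm : ∀ X Y Z W, R X Y Z W = R Z W X Y
  bianchi : ∀ X Y Z W, R X Y Z W + R Y Z X W + R Z X Y W = 0

/-- The bilinear expression `B(R,S)`, computed with respect to an orthonormal basis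
(the result is independent of the choice of orthonormal basis). -/
noncomputable def Bop [FiniteDimensional ℝ V] (R S : V → V → V → V → ℝ)
    (X Y Z W : V) : ℝ :=
  let b := stdOrthonormalBasis ℝ V
  (1 / 2) * ∑ p, ∑ q,
      (R X Y (b p) (b q) * S Z W (b p) (b q) + R Z W (b p) (b q) * S X Y (b p) (b q))
  + ∑ p, ∑ q,
      (R X (b p) Z (b q) * S Y (b p) W (b q) + R Y (b p) W (b q) * S X (b p) Z (b q))
  - ∑ p, ∑ q,
      (R X (b p) W (b q) * S Y (b p) Z (b q) + R Y (b p) Z (b q) * S X (b p) W (b q))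

/-- `Q(R) = B(R,R)`. -/
noncomputable def Qop [FiniteDimensional ℝ V] (R : V → V → V → V → ℝ) :
    V → V → V → V → ℝ :=
  Bop R R

/-- `R` has nonnegative isotropic curvature. -/
def NonnegIsotropic (R : V → V → V → V → ℝ) : Prop :=
  ∀ e₁ e₂ e₃ e₄ : V, Orthonormal ℝ ![e₁, e₂, e₃, e₄] →
    0 ≤ R e₁ e₃ e₁ e₃ + R e₁ e₄ e₁ e₄ + R e₂ e₃ e₂ e₃ + R e₂ e₄ e₂ e₄
        - 2 * R e₁ e₂ e₃ e₄

/-- The Ricci tensor of an algebraic curvature tensor. -/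
noncomputable def RicciT [FiniteDimensional ℝ V] (R : V → V → V → V → ℝ)
    (X Y : V) : ℝ :=
  ∑ p, R X (stdOrthonormalBasis ℝ V p) Y (stdOrthonormalBasis ℝ V p)

/-- An orthogonal complex structure on `V`. -/
def IsOrthCplx (J : V →ₗ[ℝ] V) : Prop :=
  (∀ X, J (J X) = -X) ∧ (∀ X Y : V, ⟪J X, J Y⟫ = ⟪X, Y⟫)

/-- A quaternionic structure on `V`: three orthogonal complex structures with `IJK = -id`. -/
def IsQuatStruct (I J K : V →ₗ[ℝ] V) : Prop :=
  IsOrthCplx I ∧ IsOrthCplx J ∧ IsOrthCplx K ∧ ∀ X, I (J (K X)) = -X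

/-- `R` is `J`-invariant (Kähler). -/
def IsKaehlerTensor (J : V →ₗ[ℝ] V) (R : V → V → V → V → ℝ) : Prop :=
  ∀ X Y Z W, R X Y (J Z) (J W) = R X Y Z W

/-- `R` is hyper-Kähler with respect to the quaternionic structure `I, J, K`. -/
def IsHyperKaehler (I J K : V →ₗ[ℝ] V) (R : V → V → V → V → ℝ) : Prop :=
  IsKaehlerTensor I R ∧ IsKaehlerTensor J R ∧ IsKaehlerTensor K R

/-- The curvature tensor `R₀` of quaternionic projective space, associated to a
quaternionic structure `I, J, K`. -/
noncomputable def quatR0 (I J K : V →ₗ[ℝ] V) (X Y Z W : V) : ℝ :=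
  (1 / 4) * (⟪X, Z⟫ * ⟪Y, W⟫ - ⟪X, W⟫ * ⟪Y, Z⟫
    + 2 * ⟪I X, Y⟫ * ⟪I Z, W⟫ + ⟪I X, Z⟫ * ⟪I Y, W⟫ - ⟪I X, W⟫ * ⟪I Y, Z⟫
    + 2 * ⟪J X, Y⟫ * ⟪J Z, W⟫ + ⟪J X, Z⟫ * ⟪J Y, W⟫ - ⟪J X, W⟫ * ⟪J Y, Z⟫
    + 2 * ⟪K X, Y⟫ * ⟪K Z, W⟫ + ⟪K X, Z⟫ * ⟪K Y, W⟫ - ⟪K X, W⟫ * ⟪K Y, Z⟫)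

section Tensor

variable {R : V → V → V → V → ℝ}

namespace IsAlgCurvTensor

lemma add₂ (h : IsAlgCurvTensor R) (X Y Y' Z W : V) :
    R X (Y + Y') Z W = R X Y Z W + R X Y' Z W := by
  rw [h.antisymm, h.addLeft, h.antisymm Y, h.antisymm Y']; ring

lemma add₃ (h : IsAlgCurvTensor R) (X Y Z Z' W : V) :
    R X Y (Z + Z') W = R X Y Z W + R X Y Z' W := by
  rw [h.pairSymm, h.addLeft, h.pairSymm Z, h.pairSymm Z']

lemma add₄ (h : IsAlgCurvTensor R) (X Y Z W W' : V) :
    R X Y Z (W + W') = R X Y Z W + R X Y Z W' := by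
  rw [h.pairSymm, h.add₂, h.pairSymm Z, h.pairSymm Z]

lemma smul₂ (h : IsAlgCurvTensor R) (c : ℝ) (X Y Z W : V) :
    R X (c • Y) Z W = c * R X Y Z W := by
  rw [h.antisymm, h.smulLeft, h.antisymm Y]; ring

lemma smul₃ (h : IsAlgCurvTensor R) (c : ℝ) (X Y Z W : V) :
    R X Y (c • Z) W = c * R X Y Z W := by
  rw [h.pairSymm, h.smulLeft, h.pairSymm Z]

lemma smul₄ (h : IsAlgCurvTensor R) (c : ℝ) (X Y Z W : V) :
    R X Y Z (c • W) = c * R X Y Z W := by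
  rw [h.pairSymm, h.smul₂, h.pairSymm Z]

lemma neg₁ (h : IsAlgCurvTensor R) (X Y Z W : V) : R (-X) Y Z W = -R X Y Z W := by
  simpa using h.smulLeft (-1) X Y Z W

lemma neg₂ (h : IsAlgCurvTensor R) (X Y Z W : V) : R X (-Y) Z W = -R X Y Z W := by
  simpa using h.smul₂ (-1) X Y Z W

lemma neg₃ (h : IsAlgCurvTensor R) (X Y Z W : V) : R X Y (-Z) W = -R X Y Z W := by
  simpa using h.smul₃ (-1) X Y Z W

lemma neg₄ (h : IsAlgCurvTensor R) (X Y Z W : V) : R X Y Z (-W) = -R X Y Z W := by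
  simpa using h.smul₄ (-1) X Y Z W

lemma self₁₂ (h : IsAlgCurvTensor R) (X Z W : V) : R X X Z W = 0 := by
  linarith [h.antisymm X X Z W]

end IsAlgCurvTensor

/-- The trace of a bilinear form does not depend on the orthonormal basis. -/
lemma sum_bilin_eq [FiniteDimensional ℝ V] {ι κ : Type*} [Fintype ι] [Fintype κ]
    (b : OrthonormalBasis ι ℝ V) (c : OrthonormalBasis κ ℝ V) (β : V →ₗ[ℝ] V →ₗ[ℝ] ℝ) :
    ∑ p, β (b p) (b p) = ∑ p, β (c p) (c p) := by
  classical
  have h := (InnerProductSpace.canonicalCovariantTensor_eq_sum V b).symm.trans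
    (InnerProductSpace.canonicalCovariantTensor_eq_sum V c)
  simpa using congrArg (TensorProduct.lift β) h

/-- The scalar curvature may be computed in any orthonormal basis. -/
lemma scalar_eq_sum [FiniteDimensional ℝ V] (h : IsAlgCurvTensor R) {κ : Type*} [Fintype κ]
    (c : OrthonormalBasis κ ℝ V) :
    ∑ p, RicciT R (stdOrthonormalBasis ℝ V p) (stdOrthonormalBasis ℝ V p)
      = ∑ p, ∑ q, R (c p) (c q) (c p) (c q) := by
  have ric : ∀ X, RicciT R X X = ∑ q, R X (c q) X (c q) := fun X =>
    sum_bilin_eq (stdOrthonormalBasis ℝ V) c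
      (LinearMap.mk₂ ℝ (fun Y Y' => R X Y X Y') (fun _ _ _ => h.add₂ _ _ _ _ _)
        (fun _ _ _ => h.smul₂ _ _ _ _ _) (fun _ _ _ => h.add₄ _ _ _ _ _)
        (fun _ _ _ => h.smul₄ _ _ _ _ _))
  simp_rw [ric]
  rw [sum_comm, sum_comm (s := univ (α := κ)) (t := univ (α := κ))]
  refine sum_congr rfl fun q _ => ?_
  exact sum_bilin_eq (stdOrthonormalBasis ℝ V) c
      (LinearMap.mk₂ ℝ (fun Y Y' => R Y (c q) Y' (c q)) (fun _ _ _ => h.addLeft _ _ _ _ _)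
        (fun _ _ _ => h.smulLeft _ _ _ _ _) (fun _ _ _ => h.add₃ _ _ _ _ _)
        (fun _ _ _ => h.smul₃ _ _ _ _ _))

/-- Fewer than `dim V` vectors have a common unit normal. -/
lemma exists_unit_orthogonal [FiniteDimensional ℝ V] {k : ℕ} (v : Fin k → V)
    (hk : k < Module.finrank ℝ V) : ∃ w : V, ‖w‖ = 1 ∧ ∀ i, ⟪v i, w⟫ = 0 := by
  set S := Submodule.span ℝ (Set.range v)
  have hS : Module.finrank ℝ S ≤ k := by
    simpa [Set.finrank] using finrank_range_le_card (R := ℝ) v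
  have hne : Sᗮ ≠ ⊥ := by
    intro h0
    have := S.finrank_add_finrank_orthogonal
    rw [h0, finrank_bot] at this
    omega
  obtain ⟨w, hw, hw0⟩ := Submodule.exists_mem_ne_zero_of_ne_bot hne
  refine ⟨‖w‖⁻¹ • w, ?_, fun i => ?_⟩
  · rw [norm_smul, norm_inv, norm_norm, inv_mul_cancel₀ (norm_ne_zero_iff.2 hw0)]
  · rw [inner_smul_right, hw (v i) (Submodule.subset_span ⟨i, rfl⟩), mul_zero]

variable {J : V →ₗ[ℝ] V}

lemma IsOrthCplx.inner_swap (hJ : IsOrthCplx J) (X Y : V) : ⟪X, J Y⟫ = -⟪J X, Y⟫ := by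
  rw [← hJ.2 X, hJ.1, inner_neg_right]

lemma IsOrthCplx.inner_self (hJ : IsOrthCplx J) (X : V) : ⟪J X, X⟫ = 0 := by
  linarith [hJ.inner_swap X X, real_inner_comm X (J X)]

lemma IsOrthCplx.norm_map (hJ : IsOrthCplx J) (X : V) : ‖J X‖ = ‖X‖ := by
  rw [norm_eq_sqrt_real_inner, norm_eq_sqrt_real_inner X, hJ.2]

/-- Kähler tensors are also `J`-invariant in the first pair of slots. -/
lemma kaehler_left (hR : IsAlgCurvTensor R) (hK : IsKaehlerTensor J R) (X Y Z W : V) :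
    R (J X) (J Y) Z W = R X Y Z W := by
  rw [hR.pairSymm, hK, hR.pairSymm]

lemma kaehler_symm_left (hJ : IsOrthCplx J) (hR : IsAlgCurvTensor R) (hK : IsKaehlerTensor J R)
    (X Y Z W : V) : R X (J Y) Z W = R Y (J X) Z W := by
  rw [← kaehler_left hR hK, hJ.1, hR.neg₂, ← hR.antisymm]

lemma kaehler_symm_right (hJ : IsOrthCplx J) (hR : IsAlgCurvTensor R) (hK : IsKaehlerTensor J R)
    (X Y Z W : V) : R X Y Z (J W) = R X Y W (J Z) := by
  rw [hR.pairSymm, kaehler_symm_left hJ hR hK, hR.pairSymm]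

lemma bisec_eq (hJ : IsOrthCplx J) (hR : IsAlgCurvTensor R) (hK : IsKaehlerTensor J R)
    (X Y : V) : R X (J X) Y (J Y) = R X Y X Y + R X (J Y) X (J Y) := by
  have h1 := hR.bianchi X (J X) Y (J Y)
  have h2 : R (J X) Y X (J Y) = -R X (J Y) X (J Y) := by
    rw [hR.antisymm, kaehler_symm_left hJ hR hK]
  have h3 : R Y X (J X) (J Y) = -R X Y X Y := by rw [hK, hR.antisymm]
  linarith

/-- Polarization of the bisectional curvature along `X + Y`, `X - Y`. -/
lemma bisec_add_sub (hJ : IsOrthCplx J) (hR : IsAlgCurvTensor R) (hK : IsKaehlerTensor J R)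
    (X Y : V) : R (X + Y) (J (X + Y)) (X - Y) (J (X - Y))
      = R X (J X) X (J X) + R Y (J Y) Y (J Y) + 2 * R X (J X) Y (J Y)
        - 4 * R X (J Y) X (J Y) := by
  simp only [sub_eq_add_neg, map_add, map_neg, hR.addLeft, hR.add₂, hR.add₃, hR.add₄,
    hR.neg₃, hR.neg₄, kaehler_symm_left hJ hR hK Y X, kaehler_symm_right hJ hR hK _ _ Y X,
    hR.pairSymm Y (J Y) X, hR.pairSymm X (J Y) X (J X)]
  ring

/-- Polarization of the holomorphic sectional curvature along `X + Y`, `X - Y`. -/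
lemma holSec_add_add_holSec_sub (hJ : IsOrthCplx J) (hR : IsAlgCurvTensor R)
    (hK : IsKaehlerTensor J R) (X Y : V) :
    R (X + Y) (J (X + Y)) (X + Y) (J (X + Y)) + R (X - Y) (J (X - Y)) (X - Y) (J (X - Y))
      = 2 * R X (J X) X (J X) + 2 * R Y (J Y) Y (J Y) + 4 * R X (J X) Y (J Y)
        + 8 * R X (J Y) X (J Y) := by
  simp only [sub_eq_add_neg, map_add, map_neg, hR.addLeft, hR.add₂, hR.add₃, hR.add₄,
    hR.neg₁, hR.neg₂, hR.neg₃, hR.neg₄, kaehler_symm_left hJ hR hK Y X,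
    kaehler_symm_right hJ hR hK _ _ Y X, hR.pairSymm Y (J Y) X]
  ring

lemma bisec_smul (hR : IsAlgCurvTensor R) (a b : ℝ) (X Y : V) :
    R (a • X) (J (a • X)) (b • Y) (J (b • Y)) = a ^ 2 * b ^ 2 * R X (J X) Y (J Y) := by
  simp only [map_smul, hR.smulLeft, hR.smul₂, hR.smul₃, hR.smul₄]
  ring

/-- Vanishing on complex-orthogonal unit pairs extends by homogeneity to all complex-orthogonal
pairs. -/
lemma bisec_eq_zero (hR : IsAlgCurvTensor R)
    (hzero : ∀ Z W : V, ‖Z‖ = 1 → ‖W‖ = 1 → ⟪Z, W⟫ = 0 → ⟪J Z, W⟫ = 0 →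
      R Z (J Z) W (J W) = 0)
    {Z W : V} (h : ⟪Z, W⟫ = 0) (h' : ⟪J Z, W⟫ = 0) : R Z (J Z) W (J W) = 0 := by
  rcases eq_or_ne Z 0 with rfl | hZ
  · simpa using bisec_smul (J := J) hR 0 1 0 W
  rcases eq_or_ne W 0 with rfl | hW
  · simpa using bisec_smul (J := J) hR 1 0 Z 0
  have hZ' := norm_ne_zero_iff.2 hZ
  have hW' := norm_ne_zero_iff.2 hW
  have key := hzero (‖Z‖⁻¹ • Z) (‖W‖⁻¹ • W) (by simp [norm_smul, hZ']) (by simp [norm_smul, hW'])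
    (by simp [inner_smul_left, inner_smul_right, h])
    (by simp [inner_smul_left, inner_smul_right, h'])
  rw [bisec_smul hR] at key
  simpa [hZ, hW] using key

/-- Holomorphic sectional curvatures of complex-orthogonal vectors of equal length cancel. -/
lemma holSec_add (hJ : IsOrthCplx J) (hR : IsAlgCurvTensor R) (hK : IsKaehlerTensor J R)
    (hzero : ∀ Z W : V, ‖Z‖ = 1 → ‖W‖ = 1 → ⟪Z, W⟫ = 0 → ⟪J Z, W⟫ = 0 →
      R Z (J Z) W (J W) = 0)
    {Z W : V} (hn : ‖Z‖ = ‖W‖) (h : ⟪Z, W⟫ = 0) (h' : ⟪J Z, W⟫ = 0) :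
    R Z (J Z) Z (J Z) + R W (J W) W (J W) = 0 := by
  have pol : ∀ {U : V}, ‖Z‖ = ‖U‖ → ⟪Z, U⟫ = 0 → ⟪J Z, U⟫ = 0 →
      R Z (J Z) Z (J Z) + R U (J U) U (J U) + 2 * R Z (J Z) U (J U)
        - 4 * R Z (J U) Z (J U) = 0 := by
    intro U hn h h'
    rw [← bisec_add_sub hJ hR hK]
    apply bisec_eq_zero hR hzero
    · simp only [inner_add_left, inner_sub_right, real_inner_self_eq_norm_sq, hn,
        real_inner_comm Z U, h]
      ring
    · have hs := hJ.inner_swap Z U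
      rw [real_inner_comm] at hs
      simp only [map_add, inner_add_left, inner_sub_right, hJ.inner_self, hs, h']
      ring
  have h1 := pol hn h h'
  have h2 := pol (hn.trans (hJ.norm_map W).symm) (by rw [hJ.inner_swap, h', neg_zero])
    (by rw [hJ.2, h])
  have hB := bisec_eq_zero hR hzero h h'
  have hE := bisec_eq hJ hR hK Z W
  simp only [hJ.1, hR.neg₂, hR.neg₄] at h2
  have e2 : R (J W) W (J W) W = R W (J W) W (J W) := by
    rw [hR.antisymm, hR.pairSymm, hR.antisymm, hR.pairSymm]; ring
  have e3 : R Z (J Z) (J W) W = -R Z (J Z) W (J W) := by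
    rw [hR.pairSymm, hR.antisymm, hR.pairSymm]
  rw [e2, e3] at h2
  linarith

/-- In real dimension four, a unitary basis `X, JX, Y, JY` computes the scalar curvature. -/
lemma scalar_eq_zero_of_finrank_four [FiniteDimensional ℝ V] (hdim : Module.finrank ℝ V = 4)
    (hJ : IsOrthCplx J) (hR : IsAlgCurvTensor R) (hK : IsKaehlerTensor J R)
    (hzero : ∀ Z W : V, ‖Z‖ = 1 → ‖W‖ = 1 → ⟪Z, W⟫ = 0 → ⟪J Z, W⟫ = 0 →
      R Z (J Z) W (J W) = 0) :
    ∑ p, RicciT R (stdOrthonormalBasis ℝ V p) (stdOrthonormalBasis ℝ V p) = 0 := by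
  obtain ⟨X, hX, -⟩ := exists_unit_orthogonal (V := V) ![] (by omega)
  obtain ⟨Y, hY, hXY⟩ := exists_unit_orthogonal ![X, J X] (by omega)
  have h1 : ⟪X, Y⟫ = 0 := hXY 0
  have h2 : ⟪J X, Y⟫ = 0 := hXY 1
  have h3 : ⟪X, J Y⟫ = 0 := by rw [hJ.inner_swap, h2, neg_zero]
  have hon : Orthonormal ℝ ![X, J X, Y, J Y] := by
    refine ⟨fun i => ?_, fun i j hij => ?_⟩
    · fin_cases i <;> simp [hJ.norm_map, hX, hY]
    · have s : ∀ {A B : V}, ⟪A, B⟫ = 0 → ⟪B, A⟫ = 0 := fun h => by rw [real_inner_comm, h]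
      fin_cases i <;> fin_cases j <;>
        simp [hJ.inner_self, s (hJ.inner_self _), h1, h2, h3, s h1, s h2, s h3, hJ.2] at hij ⊢
  let c := (basisOfOrthonormalOfCardEqFinrank hon (by simp [hdim])).toOrthonormalBasis
    (by simpa using hon)
  have hc : ⇑c = ![X, J X, Y, J Y] := by simp [c]
  have hB := bisec_eq_zero hR hzero h1 h2
  have hE := bisec_eq hJ hR hK X Y
  have hH := holSec_add hJ hR hK hzero (hX.trans hY.symm) h1 h2
  have sw : ∀ A B : V, R A B A B = R B A B A := fun A B => by
    rw [hR.antisymm, hR.pairSymm, hR.antisymm, hR.pairSymm]; ring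
  have jj : ∀ A B : V, R (J A) (J B) (J A) (J B) = R A B A B := fun A B => by
    rw [hK, kaehler_left hR hK]
  have jx : R (J X) Y (J X) Y = R X (J Y) X (J Y) := by
    rw [sw, kaehler_symm_left hJ hR hK, kaehler_symm_right hJ hR hK]
  rw [scalar_eq_sum hR c, hc]
  simp [Fin.sum_univ_four, hR.self₁₂, jj]
  linarith [sw X Y, sw X (J Y), sw (J X) Y, sw X (J X), sw Y (J Y)]

/-- In complex dimension at least three the holomorphic sectional curvature vanishes. -/
lemma holSec_eq_zero [FiniteDimensional ℝ V] (hdim : 6 ≤ Module.finrank ℝ V)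
    (hJ : IsOrthCplx J) (hR : IsAlgCurvTensor R) (hK : IsKaehlerTensor J R)
    (hzero : ∀ Z W : V, ‖Z‖ = 1 → ‖W‖ = 1 → ⟪Z, W⟫ = 0 → ⟪J Z, W⟫ = 0 →
      R Z (J Z) W (J W) = 0) (Z : V) : R Z (J Z) Z (J Z) = 0 := by
  have unit : ∀ X : V, ‖X‖ = 1 → R X (J X) X (J X) = 0 := by
    intro X hX
    obtain ⟨Y, hY, hXY⟩ := exists_unit_orthogonal ![X, J X] (by omega)
    obtain ⟨U, hU, hXU⟩ := exists_unit_orthogonal ![X, J X, Y, J Y] (by omega)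
    have a := holSec_add hJ hR hK hzero (hX.trans hY.symm) (hXY 0) (hXY 1)
    have b := holSec_add hJ hR hK hzero (hX.trans hU.symm) (hXU 0) (hXU 1)
    have c := holSec_add hJ hR hK hzero (hY.trans hU.symm) (hXU 2) (hXU 3)
    linarith
  rcases eq_or_ne Z 0 with rfl | hZ
  · simpa using bisec_smul (J := J) hR 0 0 0 0
  have key := unit (‖Z‖⁻¹ • Z) (by simp [norm_smul, norm_ne_zero_iff.2 hZ])
  rw [bisec_smul hR] at key
  simpa [hZ] using key

/-- A Kähler tensor without holomorphic sectional curvature has no sectional curvature. -/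
lemma sec_eq_zero (hJ : IsOrthCplx J) (hR : IsAlgCurvTensor R) (hK : IsKaehlerTensor J R)
    (hH : ∀ Z : V, R Z (J Z) Z (J Z) = 0) (X Y : V) : R X Y X Y = 0 := by
  have p1 := holSec_add_add_holSec_sub hJ hR hK X Y
  have p2 := holSec_add_add_holSec_sub hJ hR hK X (J Y)
  have e : R X (J X) (J Y) (J (J Y)) = R X (J X) Y (J Y) := hK _ _ _ _
  have f : R X (J (J Y)) X (J (J Y)) = R X Y X Y := by
    rw [hJ.1, hR.neg₂, hR.neg₄, neg_neg]
  simp only [hH, e, f] at p1 p2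
  linarith [bisec_eq hJ hR hK X Y]

end Tensor

theorem kaehler_zero_bisectional_scalar_flat [FiniteDimensional ℝ V]
    (m : ℕ) (hm : 2 ≤ m) (hdim : Module.finrank ℝ V = 2 * m)
    (J : V →ₗ[ℝ] V) (hJ : IsOrthCplx J)
    (R : V → V → V → V → ℝ) (hR : IsAlgCurvTensor R)
    (hK : IsKaehlerTensor J R)
    (hzero : ∀ Z W : V, ‖Z‖ = 1 → ‖W‖ = 1 → ⟪Z, W⟫ = 0 → ⟪J Z, W⟫ = 0 →
      R Z (J Z) W (J W) = 0) :
    (∀ Z W : V, ‖Z‖ = 1 → ‖W‖ = 1 → ⟪Z, W⟫ = 0 → ⟪J Z, W⟫ = 0 →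
      R Z (J Z) Z (J Z) + R W (J W) W (J W) = 0) ∧
    ∑ p, RicciT R (stdOrthonormalBasis ℝ V p) (stdOrthonormalBasis ℝ V p) = 0 := by
  refine ⟨fun Z W hZ hW h h' => holSec_add hJ hR hK hzero (hZ.trans hW.symm) h h', ?_⟩
  rcases hm.eq_or_lt with rfl | hm
  · exact scalar_eq_zero_of_finrank_four hdim hJ hR hK hzero
  · have hH := holSec_eq_zero (by omega) hJ hR hK hzero
    simp [RicciT, sec_eq_zero hJ hR hK hH]
end

section
/- Let V be a real inner product space of dimension 4m ≥ 8 with a quaternionic structure I, J, K, let R_1 be a hyper-Kähler algebraic curvature tensor on V, let κ ∈ ℝ, and set R = R_1 + κR_0 where R_0 is the associated quaternionic curvature tensor. Then for every unit vector X ∈ V, setting Y = IX, R(X,Y,X,Y) + R(X,JY,X,JY) + R(JX,Y,JX,Y) + R(JX,JY,JX,JY) + 2 R(X,JX,Y,JY) = 4(κ − R_1(X,JX,X,JX)). -/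
/-!
Both sides only involve the quaternionic line spanned by `X, IX, JX, KX`, on which `J Y = -K X`.

* The `R₀` part is a finite computation in this orthonormal frame: `R₀` restricts to the curvature
  tensor of the unit sphere, so the four sectional terms are `1` and the mixed term vanishes.
* For the hyper-Kähler part write `a_A = R₁(X, AX, X, AX)` for `A ∈ {I, J, K}`. Invariance under
  `I` and `J` turns the left-hand side into `2 a_I + 2 a_K - 2 a_J`, and the first Bianchi identity
  for `X, IX, JX, KX` gives `a_I + a_J + a_K = 0`.
-/

open scoped RealInnerProductSpace
open Finset

variable {V : Type*} [NormedAddCommGroup V] [InnerProductSpace ℝ V]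

section Quaternion

variable {I J K : V →ₗ[ℝ] V}

/-- The multiplication table of the quaternions, obtained from `I J K = -1`. -/
lemma IsQuatStruct.table (h : IsQuatStruct I J K) :
    (∀ x, I (J x) = K x) ∧ (∀ x, J (I x) = -K x) ∧ (∀ x, J (K x) = I x) ∧
      (∀ x, K (J x) = -I x) ∧ (∀ x, K (I x) = J x) ∧ (∀ x, I (K x) = -J x) := by
  obtain ⟨⟨hI, -⟩, ⟨hJ, -⟩, ⟨hK, -⟩, hIJK⟩ := h
  have hIJ : ∀ x, I (J x) = K x := fun x => by
    have := hIJK (K x)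
    rw [hK, map_neg, map_neg] at this
    exact neg_injective this
  have hJK : ∀ x, J (K x) = I x := fun x => by
    have := congrArg I (hIJK x)
    rw [hI, map_neg] at this
    exact neg_injective this
  have hIK : ∀ x, I (K x) = -J x := fun x => by rw [← hIJ, hI]
  have hKJ : ∀ x, K (J x) = -I x := fun x => by rw [← hIJ, hJ, map_neg]
  have hJI : ∀ x, J (I x) = -K x := fun x => by rw [← hJK, hJ]
  have hKI : ∀ x, K (I x) = J x := fun x => by
    rw [← hIJ, hJI, map_neg, hIK, neg_neg]
  exact ⟨hIJ, hJI, hJK, hKJ, hKI, hIK⟩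

lemma IsOrthCplx.inner_left_self (h : IsOrthCplx J) (x : V) : ⟪J x, x⟫ = 0 := by
  have h1 := h.2 (J x) x
  rw [h.1, inner_neg_left, real_inner_comm] at h1
  linarith

/-- For a unit vector `X`, the vectors `X, IX, JX, KX` are orthonormal. -/
lemma IsQuatStruct.inner_table (h : IsQuatStruct I J K) {X : V} (hX : ‖X‖ = 1) :
    ⟪X, X⟫ = 1 ∧ ⟪I X, I X⟫ = 1 ∧ ⟪J X, J X⟫ = 1 ∧ ⟪K X, K X⟫ = 1 ∧
      ⟪I X, X⟫ = 0 ∧ ⟪J X, X⟫ = 0 ∧ ⟪K X, X⟫ = 0 ∧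
      ⟪I X, J X⟫ = 0 ∧ ⟪J X, K X⟫ = 0 ∧ ⟪K X, I X⟫ = 0 := by
  obtain ⟨hIJ, -, hJK, -, hKI, -⟩ := h.table
  obtain ⟨hI, hJ, hK, -⟩ := h
  have h1 : ⟪X, X⟫ = 1 := by rw [real_inner_self_eq_norm_sq, hX]; norm_num
  refine ⟨h1, by rw [hI.2, h1], by rw [hJ.2, h1], by rw [hK.2, h1], hI.inner_left_self X,
    hJ.inner_left_self X, hK.inner_left_self X, ?_, ?_, ?_⟩
  · rw [← hKI X, real_inner_comm, hK.inner_left_self]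
  · rw [← hIJ X, real_inner_comm, hI.inner_left_self]
  · rw [← hJK X, real_inner_comm, hJ.inner_left_self]

/-- The `R₀` part of the identity; `-K X` is `J Y` for `Y = I X`. -/
lemma quatR0_identity (h : IsQuatStruct I J K) {X : V} (hX : ‖X‖ = 1) :
    quatR0 I J K X (I X) X (I X) + quatR0 I J K X (-K X) X (-K X)
      + quatR0 I J K (J X) (I X) (J X) (I X) + quatR0 I J K (J X) (-K X) (J X) (-K X)
      + 2 * quatR0 I J K X (J X) (I X) (-K X) = 4 := by
  obtain ⟨hIJ, hJI, hJK, hKJ, hKI, hIK⟩ := h.table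
  obtain ⟨h00, h11, h22, h33, h10, h20, h30, h12, h23, h31⟩ := h.inner_table hX
  have h01 := (real_inner_comm (I X) X).trans h10
  have h02 := (real_inner_comm (J X) X).trans h20
  have h03 := (real_inner_comm (K X) X).trans h30
  have h21 := (real_inner_comm (I X) (J X)).trans h12
  have h32 := (real_inner_comm (J X) (K X)).trans h23
  have h13 := (real_inner_comm (K X) (I X)).trans h31
  obtain ⟨⟨hI, -⟩, ⟨hJ, -⟩, ⟨hK, -⟩, -⟩ := h
  simp only [quatR0, map_neg, hI, hJ, hK, hIJ, hJI, hJK, hKJ, hKI, hIK, inner_neg_left,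
    inner_neg_right, h00, h11, h22, h33, h10, h20, h30, h12, h23, h31, h01, h02, h03, h21, h32, h13]
  norm_num

end Quaternion

section Curvature

variable {R : V → V → V → V → ℝ}

lemma IsAlgCurvTensor.neg₁_s13 (h : IsAlgCurvTensor R) (X Y Z W : V) :
    R (-X) Y Z W = -R X Y Z W := by
  simpa using h.smulLeft (-1) X Y Z W

lemma IsAlgCurvTensor.neg₂_s13 (h : IsAlgCurvTensor R) (X Y Z W : V) :
    R X (-Y) Z W = -R X Y Z W := by
  rw [h.antisymm, h.neg₁_s13, h.antisymm Y X, neg_neg]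

lemma IsAlgCurvTensor.neg₄_s13 (h : IsAlgCurvTensor R) (X Y Z W : V) :
    R X Y Z (-W) = -R X Y Z W := by
  rw [h.pairSymm, h.neg₂_s13, h.pairSymm Z]

/-- A Kähler tensor is also invariant in its first pair of arguments. -/
lemma IsKaehlerTensor.left {A : V →ₗ[ℝ] V} (hA : IsKaehlerTensor A R) (h : IsAlgCurvTensor R)
    (X Y Z W : V) : R (A X) (A Y) Z W = R X Y Z W := by
  rw [h.pairSymm, hA, h.pairSymm]

/-- The hyper-Kähler part of the identity; `-K X` is `J Y` for `Y = I X`. -/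
lemma hyperKaehler_identity {I J K : V →ₗ[ℝ] V} (hq : IsQuatStruct I J K)
    (h : IsAlgCurvTensor R) (hHK : IsHyperKaehler I J K R) (X : V) :
    R X (I X) X (I X) + R X (-K X) X (-K X) + R (J X) (I X) (J X) (I X)
      + R (J X) (-K X) (J X) (-K X) + 2 * R X (J X) (I X) (-K X) = -4 * R X (J X) X (J X) := by
  obtain ⟨hIJ, hJI, hJK, -, -, -⟩ := hq.table
  obtain ⟨⟨hI, -⟩, -⟩ := hq
  obtain ⟨kI, kJ, -⟩ := hHK
  have e2 : R X (-K X) X (-K X) = R X (K X) X (K X) := by rw [h.neg₂_s13, h.neg₄_s13, neg_neg]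
  have e3 : R (J X) (I X) (J X) (I X) = R X (K X) X (K X) := by
    rw [← hJK X, kJ, kJ.left h]
  have e4 : R (J X) (-K X) (J X) (-K X) = R X (I X) X (I X) := by
    rw [← hJI X, kJ, kJ.left h]
  have e5 : R X (J X) (I X) (-K X) = -R X (J X) X (J X) := by
    rw [h.neg₄_s13, ← hIJ X, kI]
  have b1 : R X (I X) (J X) (K X) = -R X (I X) X (I X) := by
    rw [← kJ X (I X) X (I X), hJI, h.neg₄_s13, neg_neg]
  have b2 : R (I X) (J X) X (K X) = -R X (K X) X (K X) := by
    rw [← kI.left h (I X) (J X), hI, hIJ, h.neg₁_s13]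
  have b3 : R (J X) X (I X) (K X) = -R X (J X) X (J X) := by
    rw [← hIJ X, kI, h.antisymm]
  have hb := h.bianchi X (I X) (J X) (K X)
  linarith

end Curvature

theorem quat_isotropic_identity [FiniteDimensional ℝ V]
    (m : ℕ) (hm : 2 ≤ m) (hdim : Module.finrank ℝ V = 4 * m)
    (I J K : V →ₗ[ℝ] V) (hquat : IsQuatStruct I J K)
    (R₁ : V → V → V → V → ℝ) (hR₁ : IsAlgCurvTensor R₁)
    (hHK : IsHyperKaehler I J K R₁) (κ : ℝ)
    (R : V → V → V → V → ℝ)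
    (hRdef : R = fun X Y Z W => R₁ X Y Z W + κ * quatR0 I J K X Y Z W)
    (X : V) (hX : ‖X‖ = 1) (Y : V) (hY : Y = I X) :
    R X Y X Y + R X (J Y) X (J Y) + R (J X) Y (J X) Y + R (J X) (J Y) (J X) (J Y)
      + 2 * R X (J X) Y (J Y) = 4 * (κ - R₁ X (J X) X (J X)) := by
  subst hRdef hY
  have h0 := quatR0_identity hquat hX
  have h1 := hyperKaehler_identity hquat hR₁ hHK X
  simp only [hquat.table.2.1 X]
  linear_combination h1 + κ * h0
end

section
/- Let V be a real inner product space of dimension 4m ≥ 8 with a quaternionic structure I, J, K, let R_1 be a hyper-Kähler algebraic curvature tensor on V, let κ ∈ ℝ, and set R = R_1 + κR_0 where R_0 is the associated quaternionic curvature tensor. If R has nonnegative isotropic curvature, then R_1(X,JX,X,JX) ≤ κ for every unit vector X ∈ V. -/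
/-!
The isotropic curvature condition is applied to the frame `X, JX, IX, KX`, which spans the
quaternionic line through the unit vector `X`. Write `G_A = R₁(X, AX, X, AX)` for `A = I, J, K`.

The tensor `R₀` restricts to this line as the curvature tensor of constant curvature one, so it
contributes `4κ`. By invariance under `I, J, K`, the four sectional terms of `R₁` add up to
`2 (G_I + G_K)`, and `R₁(X, JX, IX, KX) = G_J`. The Bianchi identity for `X, JX, IX, KX` reads
`G_I + G_J + G_K = 0`, so the isotropic curvature of the frame is
`2 (G_I + G_K) - 2 G_J + 4κ = 4 (κ - G_J)`, and nonnegativity is the claim.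
-/

open scoped RealInnerProductSpace
open Finset

variable {V : Type*} [NormedAddCommGroup V] [InnerProductSpace ℝ V]

theorem quat_nonneg_isotropic_bound [FiniteDimensional ℝ V]
    (m : ℕ) (hm : 2 ≤ m) (hdim : Module.finrank ℝ V = 4 * m)
    (I J K : V →ₗ[ℝ] V) (hquat : IsQuatStruct I J K)
    (R₁ : V → V → V → V → ℝ) (hR₁ : IsAlgCurvTensor R₁)
    (hHK : IsHyperKaehler I J K R₁) (κ : ℝ)
    (R : V → V → V → V → ℝ)
    (hRdef : R = fun X Y Z W => R₁ X Y Z W + κ * quatR0 I J K X Y Z W)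
    (hnn : NonnegIsotropic R) :
    ∀ X : V, ‖X‖ = 1 → R₁ X (J X) X (J X) ≤ κ := by
  intro X hX
  obtain ⟨⟨hII, hIo⟩, ⟨hJJ, hJo⟩, ⟨hKK, hKo⟩, hIJK⟩ := hquat
  obtain ⟨hkI, hkJ, hkK⟩ := hHK
  -- The quaternion multiplication table.
  have hJK : ∀ Y, J (K Y) = I Y := fun Y => by
    have h := congrArg I (hIJK Y)
    rw [hII, map_neg] at h
    exact neg_injective h
  have hIJ : ∀ Y, I (J Y) = K Y := fun Y => by
    have h := hIJK (K Y)
    rw [hKK, map_neg, map_neg] at h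
    exact neg_injective h
  have hIK : ∀ Y, I (K Y) = -J Y := fun Y => by rw [← hIJ, hII]
  have hJI : ∀ Y, J (I Y) = -K Y := fun Y => by rw [← hJK, hJJ]
  have hKI : ∀ Y, K (I Y) = J Y := fun Y => by rw [← hIJ, hJI, map_neg, hIK, neg_neg]
  have hKJ : ∀ Y, K (J Y) = -I Y := fun Y => by rw [← hIJ, hJJ, map_neg]
  -- A vector is orthogonal to its image under an orthogonal complex structure.
  have skew : ∀ A : V →ₗ[ℝ] V, (∀ Y, A (A Y) = -Y) → (∀ Y Z : V, ⟪A Y, A Z⟫ = ⟪Y, Z⟫) →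
      ⟪A X, X⟫ = 0 := fun A h1 h2 => by
    have h := h2 (A X) X
    rw [h1, inner_neg_left, real_inner_comm] at h
    linarith
  have hXX : ⟪X, X⟫ = 1 := by rw [real_inner_self_eq_norm_sq, hX]; norm_num
  have iI : ⟪I X, X⟫ = 0 := skew I hII hIo
  have iJ : ⟪J X, X⟫ = 0 := skew J hJJ hJo
  have iK : ⟪K X, X⟫ = 0 := skew K hKK hKo
  have iI' : ⟪X, I X⟫ = 0 := by rw [real_inner_comm, iI]
  have iJ' : ⟪X, J X⟫ = 0 := by rw [real_inner_comm, iJ]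
  have iK' : ⟪X, K X⟫ = 0 := by rw [real_inner_comm, iK]
  have iIJ : ⟪I X, J X⟫ = 0 := by rw [← hIo, hII, hIJ, inner_neg_left, iK', neg_zero]
  have iIK : ⟪I X, K X⟫ = 0 := by
    rw [← hIo, hII, hIK, inner_neg_left, inner_neg_right, iJ', neg_zero, neg_zero]
  have iJK : ⟪J X, K X⟫ = 0 := by rw [← hJo, hJJ, hJK, inner_neg_left, iI', neg_zero]
  have iJI : ⟪J X, I X⟫ = 0 := by rw [real_inner_comm, iIJ]
  have iKI : ⟪K X, I X⟫ = 0 := by rw [real_inner_comm, iIK]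
  have iKJ : ⟪K X, J X⟫ = 0 := by rw [real_inner_comm, iJK]
  have hI1 : ⟪I X, I X⟫ = 1 := by rw [hIo, hXX]
  have hJ1 : ⟪J X, J X⟫ = 1 := by rw [hJo, hXX]
  have hK1 : ⟪K X, K X⟫ = 1 := by rw [hKo, hXX]
  have hn : ∀ A : V →ₗ[ℝ] V, (∀ Y Z : V, ⟪A Y, A Z⟫ = ⟪Y, Z⟫) → ‖A X‖ = 1 := fun A h => by
    rw [norm_eq_sqrt_real_inner, h, hXX, Real.sqrt_one]
  have horth : Orthonormal ℝ ![X, J X, I X, K X] := by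
    rw [orthonormal_iff_ite]
    intro i j
    fin_cases i <;> fin_cases j <;> simp [hX, hn I hIo, hn J hJo, hn K hKo, iI, iJ, iK, iI', iJ', iK',
      iIJ, iIK, iJK, iJI, iKI, iKJ]
  have key := hnn _ _ _ _ horth
  have neg1 : ∀ Y Z W U, R₁ (-Y) Z W U = -R₁ Y Z W U := fun Y Z W U => by
    have h := hR₁.smulLeft (-1) Y Z W U
    simpa using h
  have neg2 : ∀ Y Z W U, R₁ Y (-Z) W U = -R₁ Y Z W U := fun Y Z W U => by
    rw [hR₁.antisymm, neg1, ← hR₁.antisymm Y Z W U]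
  have neg3 : ∀ Y Z W U, R₁ Y Z (-W) U = -R₁ Y Z W U := fun Y Z W U => by
    rw [hR₁.pairSymm, neg1, hR₁.pairSymm]
  have neg4 : ∀ Y Z W U, R₁ Y Z W (-U) = -R₁ Y Z W U := fun Y Z W U => by
    rw [hR₁.pairSymm, neg2, hR₁.pairSymm]
  -- Invariance in the first pair follows from invariance in the second by pair symmetry.
  have hkJ' : ∀ Y Z W U, R₁ (J Y) (J Z) W U = R₁ Y Z W U := fun Y Z W U => by
    rw [hR₁.pairSymm, hkJ, hR₁.pairSymm]
  have e1 : R₁ (J X) (I X) (J X) (I X) = R₁ X (K X) X (K X) := by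
    rw [← hkJ, ← hkJ']
    simp only [hJJ, hJI, neg1, neg2, neg3, neg4, neg_neg]
  have e2 : R₁ (J X) (K X) (J X) (K X) = R₁ X (I X) X (I X) := by
    rw [← hkJ, ← hkJ']
    simp only [hJJ, hJK, neg1, neg3, neg_neg]
  have e3 : R₁ X (J X) (I X) (K X) = R₁ X (J X) X (J X) := by
    rw [← hkI]
    simp only [hII, hIK, neg3, neg4, neg_neg]
  have e4 : R₁ (J X) (I X) X (K X) = R₁ X (K X) X (K X) := by
    rw [← hkJ']
    simp only [hJJ, hJI, neg1, neg2, neg_neg]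
  have e5 : R₁ (I X) X (J X) (K X) = R₁ X (I X) X (I X) := by
    rw [← hkJ, hJJ, hJK, neg3, hR₁.antisymm, neg_neg]
  have bi := hR₁.bianchi X (J X) (I X) (K X)
  rw [e3, e4, e5] at bi
  simp only [hRdef, quatR0, e1, e2, e3, hII, hJJ, hKK, hIJ, hIK, hJI, hJK, hKI, hKJ,
    inner_neg_left, hXX, hI1, hJ1, hK1, iI, iJ, iK, iI', iJ', iK',
    iIJ, iIK, iJK, iJI, iKI, iKJ] at key
  linarith
end

section
/- Let V be a real inner product space of dimension n ≥ 4 and let R be an algebraic curvature tensor on V with nonnegative isotropic curvature. Suppose {v_1,v_2,v_3,v_4} is an orthonormal four-frame in V such that the following three quantities vanish: R(v_1,v_3,v_1,v_3) + R(v_1,v_4,v_1,v_4) + R(v_2,v_3,v_2,v_3) + R(v_2,v_4,v_2,v_4) − 2R(v_1,v_2,v_3,v_4) = 0; R(v_1,v_4,v_1,v_4) + R(v_1,v_2,v_1,v_2) + R(v_3,v_4,v_3,v_4) + R(v_3,v_2,v_3,v_2) − 2R(v_1,v_3,v_4,v_2) = 0; and R(v_1,v_2,v_1,v_2) + R(v_1,v_3,v_1,v_3)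 + R(v_4,v_2,v_4,v_2) + R(v_4,v_3,v_4,v_3) − 2R(v_1,v_4,v_2,v_3) = 0. Then R(v_1,v_2,v_3,v_4) = R(v_1,v_3,v_4,v_2) = R(v_1,v_4,v_2,v_3) = 0. -/
/-!
Swapping the last two vectors of a frame reverses its orientation: it keeps the four sectional
terms of the isotropic curvature and changes the sign of the mixed term. Hence nonnegativity for
the swapped frame, together with the vanishing for the given one, makes each of the mixed terms
`R v₁ v₂ v₃ v₄`, `R v₁ v₃ v₄ v₂`, `R v₁ v₄ v₂ v₃` nonnegative. By the first Bianchi identity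
they sum to zero, so all three vanish.
-/

open scoped RealInnerProductSpace
open Finset

variable {V : Type*} [NormedAddCommGroup V] [InnerProductSpace ℝ V]

theorem three_frames_zero_isotropic [FiniteDimensional ℝ V]
    (hn : 4 ≤ Module.finrank ℝ V)
    (R : V → V → V → V → ℝ) (hR : IsAlgCurvTensor R) (hnn : NonnegIsotropic R)
    (v₁ v₂ v₃ v₄ : V) (hv : Orthonormal ℝ ![v₁, v₂, v₃, v₄])
    (h1 : R v₁ v₃ v₁ v₃ + R v₁ v₄ v₁ v₄ + R v₂ v₃ v₂ v₃ + R v₂ v₄ v₂ v₄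
        - 2 * R v₁ v₂ v₃ v₄ = 0)
    (h2 : R v₁ v₄ v₁ v₄ + R v₁ v₂ v₁ v₂ + R v₃ v₄ v₃ v₄ + R v₃ v₂ v₃ v₂
        - 2 * R v₁ v₃ v₄ v₂ = 0)
    (h3 : R v₁ v₂ v₁ v₂ + R v₁ v₃ v₁ v₃ + R v₄ v₂ v₄ v₂ + R v₄ v₃ v₄ v₃
        - 2 * R v₁ v₄ v₂ v₃ = 0) :
    R v₁ v₂ v₃ v₄ = 0 ∧ R v₁ v₃ v₄ v₂ = 0 ∧ R v₁ v₄ v₂ v₃ = 0 := by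
  have anti : ∀ X Y Z W, R X Y Z W = - R X Y W Z := fun X Y Z W => by
    rw [hR.pairSymm X Y Z W, hR.antisymm Z W X Y, hR.pairSymm W Z X Y]
  have flip : ∀ X Y, R X Y X Y = R Y X Y X := fun X Y => by
    rw [hR.antisymm X Y X Y, anti Y X X Y, neg_neg]
  have on : ∀ σ : Fin 4 → Fin 4, Function.Injective σ →
      Orthonormal ℝ (![v₁, v₂, v₃, v₄] ∘ σ) := fun σ hσ => hv.comp σ hσ
  -- The three frames of the opposite orientation, obtained by swapping the last two vectors.
  have k1 := hnn v₁ v₂ v₄ v₃ (by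
    convert on ![0, 1, 3, 2] (by decide) using 1
    ext i; fin_cases i <;> rfl)
  have k2 := hnn v₁ v₃ v₂ v₄ (by
    convert on ![0, 2, 1, 3] (by decide) using 1
    ext i; fin_cases i <;> rfl)
  have k3 := hnn v₁ v₄ v₃ v₂ (by
    convert on ![0, 3, 2, 1] (by decide) using 1
    ext i; fin_cases i <;> rfl)
  have hB := hR.bianchi v₁ v₂ v₃ v₄
  have b1 : R v₂ v₃ v₁ v₄ = R v₁ v₄ v₂ v₃ := hR.pairSymm _ _ _ _
  have b2 : R v₃ v₁ v₂ v₄ = R v₁ v₃ v₄ v₂ := by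
    rw [hR.antisymm v₃ v₁ v₂ v₄, anti v₁ v₃ v₂ v₄, neg_neg]
  have s1 := anti v₁ v₂ v₄ v₃
  have s2 := anti v₁ v₃ v₂ v₄
  have s3 := anti v₁ v₄ v₃ v₂
  have f23 := flip v₂ v₃
  have f24 := flip v₂ v₄
  have f34 := flip v₃ v₄
  refine ⟨?_, ?_, ?_⟩ <;> linarith
end
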